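/- (Recovery of one Gaussian component.) Fix means μ_1,…,μ_K ∈ ℝ^d, standard deviations σ_1,…,σ_K > 0, weights w_1,…,w_K > 0 summing to 1, θ > 0, ε with 0 < ε < F(θ,d)·w_m, and m ∈ {1,…,K}. For each n, let a_1,…,a_n be i.i.d. samples from the mixture Σ_{k=1}^K w_k·N(μ_k, σ_k²·I_d), let V_m = {i : ‖a_i − μ_m‖ ≤ θσ_m}, let λ = λ(n) satisfy λ ≥ 2θσ_m/((F(θ,d)·w_m − ε)·n), and let x* = (x_1*,…,x_n*) be the minimizer of the sum-of-norms clustering objective with parameter λ. Then there exist constants c > 0 and C such that for every n, with probability at least 1 − C·e^{−c·n}, all indices in V_m lie in the same cluster, i.e., x_i* = x_{i′}* for all i, i′ ∈ V_m. -/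

import Mathlib

open MeasureTheory ProbabilityTheory Finset

/-- The sum-of-norms clustering objective. -/
noncomputable def sonObjective {d n : ℕ} (a : Fin n → EuclideanSpace ℝ (Fin d)) (lam : ℝ)
    (x : Fin n → EuclideanSpace ℝ (Fin d)) : ℝ :=
  (1 / 2) * ∑ i, ‖x i - a i‖ ^ 2 + lam * ∑ i, ∑ j, if i < j then ‖x i - x j‖ else 0

/-- The spherical Gaussian `N(μ, σ²·I_d)` on `ℝ^d`. -/
noncomputable def sphericalGaussian (d : ℕ) (μ : EuclideanSpace ℝ (Fin d)) (σ : ℝ) :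
    Measure (EuclideanSpace ℝ (Fin d)) :=
  (Measure.pi fun i : Fin d => gaussianReal (μ i) (Real.toNNReal (σ ^ 2))).map
    (MeasurableEquiv.toLp 2 (Fin d → ℝ))

/-- The mixture of Gaussians `Σ_m w_m · N(μ_m, σ_m²·I_d)`. -/
noncomputable def gaussianMixture (d K : ℕ) (μ : Fin K → EuclideanSpace ℝ (Fin d))
    (σ : Fin K → ℝ) (w : Fin K → ℝ) : Measure (EuclideanSpace ℝ (Fin d)) :=
  ∑ m, ENNReal.ofReal (w m) • sphericalGaussian d (μ m) (σ m)

/-- The chi-squared distribution with `d` degrees of freedom. -/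
noncomputable def chiSquaredMeasure (d : ℕ) : Measure ℝ :=
  (Measure.pi fun _ : Fin d => gaussianReal 0 1).map (fun y => ∑ i, (y i) ^ 2)

/-- `F(θ, d)`: the probability that a chi-squared random variable with `d` degrees of
freedom is at most `θ²`. -/
noncomputable def chiSquaredCDF (θ : ℝ) (d : ℕ) : ℝ :=
  (chiSquaredMeasure d (Set.Iic (θ ^ 2))).toReal

/-!
Let `V` be a set of indices with `‖a i - a j‖ ≤ λ #V` for all `i, j ∈ V`, and compare `x` with the
configuration `y` in which the points of `V` are moved to their mean `c`. The penalty between `V`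
and its complement does not grow, since `c` is an average, and the penalty inside `V` vanishes. The
data term satisfies
`∑ ‖x i - a i‖² - ∑ ‖c - a i‖² = ∑ ‖x i - c‖² - (#V)⁻¹ ∑∑ ⟪x i - x j, a i - a j⟫`,
and by Cauchy–Schwarz the last double sum is absorbed by the vanished penalty. Hence `y` improves
on `x` by at least half of `∑ ‖x i - c‖²`, so a minimizer is constant on `V`.

For i.i.d. samples and `V = {i | a i ∈ B}` the condition asks for enough samples in `B`, and
Hoeffding's inequality bounds the probability of having too few. In the Gaussian case `B` is the
ball of radius `θ σ_m`, to which the component `m` alone contributes mass `F(θ, d) w_m`.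
-/

section Mean

variable {ι E : Type*}

/-- The mean `(∑ i ∈ V, x i) / #V` of a finite family of vectors; it is `0` for empty `V`. -/
noncomputable def finsetMean [AddCommMonoid E] [Module ℝ E] (V : Finset ι) (x : ι → E) : E :=
  (#V : ℝ)⁻¹ • ∑ i ∈ V, x i

/-- The configuration obtained from `x` by moving every point with index in `V` to the mean of
`x` over `V`: the competitor against which a minimizer of `sonObjective` is tested. -/
noncomputable def collapseToMean [AddCommMonoid E] [Module ℝ E] [DecidableEq ι] (V : Finset ι)
    (x : ι → E) : ι → E :=
  V.piecewise (fun _ => finsetMean V x) x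

section Module

variable [AddCommMonoid E] [Module ℝ E] {V : Finset ι}

lemma collapseToMean_of_mem [DecidableEq ι] {i : ι} (hi : i ∈ V) (x : ι → E) :
    collapseToMean V x i = finsetMean V x :=
  V.piecewise_eq_of_mem _ _ hi

lemma collapseToMean_of_notMem [DecidableEq ι] {i : ι} (hi : i ∉ V) (x : ι → E) :
    collapseToMean V x i = x i :=
  V.piecewise_eq_of_notMem _ _ hi

lemma card_smul_finsetMean (V : Finset ι) (x : ι → E) :
    (#V : ℝ) • finsetMean V x = ∑ i ∈ V, x i := by
  rcases V.eq_empty_or_nonempty with rfl | hV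
  · simp
  · exact smul_inv_smul₀ (Nat.cast_ne_zero.mpr hV.card_ne_zero) _

end Module

lemma sum_sub_finsetMean [AddCommGroup E] [Module ℝ E] (V : Finset ι) (x : ι → E) :
    ∑ i ∈ V, (x i - finsetMean V x) = 0 := by
  rw [sum_sub_distrib, sum_const, ← card_smul_finsetMean, Nat.cast_smul_eq_nsmul, sub_self]

lemma card_mul_norm_finsetMean_sub_le [NormedAddCommGroup E] [NormedSpace ℝ E] (V : Finset ι)
    (x : ι → E) (z : E) : #V * ‖finsetMean V x - z‖ ≤ ∑ i ∈ V, ‖x i - z‖ :=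
  calc #V * ‖finsetMean V x - z‖ = ‖(#V : ℝ) • (finsetMean V x - z)‖ := by simp [norm_smul]
    _ = ‖∑ i ∈ V, (x i - z)‖ := by
      rw [smul_sub, card_smul_finsetMean, sum_sub_distrib, sum_const, Nat.cast_smul_eq_nsmul]
    _ ≤ ∑ i ∈ V, ‖x i - z‖ := norm_sum_le _ _

variable [NormedAddCommGroup E] [InnerProductSpace ℝ E]

lemma sum_sum_inner_sub_sub (V : Finset ι) (x a : ι → E) :
    ∑ i ∈ V, ∑ j ∈ V, inner ℝ (x i - x j) (a i - a j) =
      #V * (2 * ∑ i ∈ V, inner ℝ (x i - finsetMean V x) (a i)) := by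
  simp only [inner_sub_left, inner_sub_right, sum_sub_distrib, sum_const, nsmul_eq_mul,
    ← inner_sum, ← sum_inner, ← mul_sum]
  rw [← card_smul_finsetMean V x, real_inner_smul_left]
  ring

lemma sum_norm_sub_sq_add_inner (V : Finset ι) (x a : ι → E) :
    ∑ i ∈ V, ‖x i - a i‖ ^ 2 + 2 * ∑ i ∈ V, inner ℝ (x i - finsetMean V x) (a i) =
      ∑ i ∈ V, ‖finsetMean V x - a i‖ ^ 2 + ∑ i ∈ V, ‖x i - finsetMean V x‖ ^ 2 := by
  set c := finsetMean V x
  have hpoint (i : ι) : ‖x i - a i‖ ^ 2 + 2 * inner ℝ (x i - c) (a i) =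
      ‖c - a i‖ ^ 2 + ‖x i - c‖ ^ 2 + 2 * inner ℝ (x i - c) c := by
    rw [← sub_add_sub_cancel (x i) c (a i), norm_add_sq_real, inner_sub_right]
    ring
  have hcentered : ∑ i ∈ V, inner ℝ (x i - c) c = 0 := by
    rw [← sum_inner, sum_sub_finsetMean, inner_zero_left]
  rw [mul_sum, ← sum_add_distrib, sum_congr rfl fun i _ => hpoint i, sum_add_distrib,
    sum_add_distrib, ← mul_sum, hcentered, mul_zero, add_zero]

lemma sum_norm_finsetMean_sub_sq_add_le {V : Finset ι} {a : ι → E} {L : ℝ}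
    (ha : ∀ i ∈ V, ∀ j ∈ V, ‖a i - a j‖ ≤ L * #V) (x : ι → E) :
    ∑ i ∈ V, ‖finsetMean V x - a i‖ ^ 2 + ∑ i ∈ V, ‖x i - finsetMean V x‖ ^ 2 ≤
      ∑ i ∈ V, ‖x i - a i‖ ^ 2 + L * ∑ i ∈ V, ∑ j ∈ V, ‖x i - x j‖ := by
  rcases V.eq_empty_or_nonempty with rfl | hV
  · simp
  have hcorrelation : #V * (2 * ∑ i ∈ V, inner ℝ (x i - finsetMean V x) (a i)) ≤
      #V * (L * ∑ i ∈ V, ∑ j ∈ V, ‖x i - x j‖) := by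
    calc #V * (2 * ∑ i ∈ V, inner ℝ (x i - finsetMean V x) (a i))
      _ = ∑ i ∈ V, ∑ j ∈ V, inner ℝ (x i - x j) (a i - a j) := (sum_sum_inner_sub_sub V x a).symm
      _ ≤ ∑ i ∈ V, ∑ j ∈ V, ‖x i - x j‖ * (L * #V) := by
        gcongr with i hi j hj
        exact (real_inner_le_norm _ _).trans (by gcongr; exact ha i hi j hj)
      _ = #V * (L * ∑ i ∈ V, ∑ j ∈ V, ‖x i - x j‖) := by
        simp only [← sum_mul]
        ring
  have hcard : (0 : ℝ) < #V := mod_cast hV.card_pos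
  rw [← sum_norm_sub_sq_add_inner]
  exact add_le_add_right (le_of_mul_le_mul_left hcorrelation hcard) _

end Mean

section PairSums

variable {ι : Type*} [Fintype ι]

lemma two_nsmul_sum_sum_ite_lt [LinearOrder ι] {M : Type*} [AddCommMonoid M] {g : ι → ι → M}
    (hg : ∀ i j, g i j = g j i) (hg₀ : ∀ i, g i i = 0) :
    2 • ∑ i, ∑ j, (if i < j then g i j else 0) = ∑ i, ∑ j, g i j := by
  have hsplit (i j : ι) : g i j = (if i < j then g i j else 0) + if j < i then g j i else 0 := by
    rcases lt_trichotomy i j with h | rfl | h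
    · simp [h, h.not_gt]
    · simp [hg₀]
    · simp [h, h.not_gt, hg i j]
  rw [sum_congr rfl fun i _ => sum_congr rfl fun j _ => hsplit i j]
  simp only [sum_add_distrib]
  rw [sum_comm (f := fun i j => if j < i then g j i else 0), two_nsmul]

lemma sum_sum_eq_add_compl [DecidableEq ι] {M : Type*} [AddCommMonoid M] (V : Finset ι)
    {g : ι → ι → M} (hg : ∀ i j, g i j = g j i) :
    ∑ i, ∑ j, g i j =
      ∑ i ∈ V, ∑ j ∈ V, g i j + 2 • ∑ j ∈ Vᶜ, ∑ i ∈ V, g i j + ∑ i ∈ Vᶜ, ∑ j ∈ Vᶜ, g i j := by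
  have hcross : ∑ i ∈ Vᶜ, ∑ j ∈ V, g i j = ∑ j ∈ Vᶜ, ∑ i ∈ V, g i j :=
    sum_congr rfl fun i _ => sum_congr rfl fun j _ => hg i j
  simp only [← sum_add_sum_compl V, sum_add_distrib]
  rw [hcross, sum_comm (s := V) (t := Vᶜ)]
  abel

lemma sum_sum_norm_collapseToMean_sub_add_le {E : Type*} [NormedAddCommGroup E] [NormedSpace ℝ E]
    [DecidableEq ι] (V : Finset ι) (x : ι → E) :
    ∑ i, ∑ j, ‖collapseToMean V x i - collapseToMean V x j‖ + ∑ i ∈ V, ∑ j ∈ V, ‖x i - x j‖ ≤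
      ∑ i, ∑ j, ‖x i - x j‖ := by
  set y := collapseToMean V x with hy
  have hinner : ∑ i ∈ V, ∑ j ∈ V, ‖y i - y j‖ = 0 :=
    sum_eq_zero fun i hi => sum_eq_zero fun j hj => by
      rw [hy, collapseToMean_of_mem hi, collapseToMean_of_mem hj, sub_self, norm_zero]
  have hcross : ∑ j ∈ Vᶜ, ∑ i ∈ V, ‖y i - y j‖ ≤ ∑ j ∈ Vᶜ, ∑ i ∈ V, ‖x i - x j‖ := by
    refine sum_le_sum fun j hj => ?_
    calc ∑ i ∈ V, ‖y i - y j‖ = ∑ _i ∈ V, ‖finsetMean V x - x j‖ :=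
          sum_congr rfl fun _ hi => by
            rw [hy, collapseToMean_of_mem hi, collapseToMean_of_notMem (mem_compl.mp hj)]
      _ = #V * ‖finsetMean V x - x j‖ := by rw [sum_const, nsmul_eq_mul]
      _ ≤ ∑ i ∈ V, ‖x i - x j‖ := card_mul_norm_finsetMean_sub_le V x (x j)
  have houter : ∑ i ∈ Vᶜ, ∑ j ∈ Vᶜ, ‖y i - y j‖ = ∑ i ∈ Vᶜ, ∑ j ∈ Vᶜ, ‖x i - x j‖ :=
    sum_congr rfl fun i hi => sum_congr rfl fun j hj => by
      rw [hy, collapseToMean_of_notMem (mem_compl.mp hi),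
        collapseToMean_of_notMem (mem_compl.mp hj)]
  rw [sum_sum_eq_add_compl V fun i j => norm_sub_rev (y i) (y j),
    sum_sum_eq_add_compl V fun i j => norm_sub_rev (x i) (x j), hinner, houter]
  simp only [two_nsmul]
  linarith

end PairSums

section Clustering

variable {d n : ℕ} {a : Fin n → EuclideanSpace ℝ (Fin d)} {lam : ℝ} {V : Finset (Fin n)}

lemma sonObjective_eq_sum_sum (a : Fin n → EuclideanSpace ℝ (Fin d)) (lam : ℝ)
    (x : Fin n → EuclideanSpace ℝ (Fin d)) :
    sonObjective a lam x =
      (1 / 2) * (∑ i, ‖x i - a i‖ ^ 2 + lam * ∑ i, ∑ j, ‖x i - x j‖) := by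
  rw [sonObjective, ← two_nsmul_sum_sum_ite_lt (fun i j => norm_sub_rev (x i) (x j)) (by simp),
    nsmul_eq_mul]
  push_cast
  ring

lemma sonObjective_collapseToMean_add_le (hlam : 0 ≤ lam)
    (ha : ∀ i ∈ V, ∀ j ∈ V, ‖a i - a j‖ ≤ lam * #V) (x : Fin n → EuclideanSpace ℝ (Fin d)) :
    sonObjective a lam (collapseToMean V x) + (1 / 2) * ∑ i ∈ V, ‖x i - finsetMean V x‖ ^ 2 ≤
      sonObjective a lam x := by
  have hin : ∑ i ∈ V, ‖collapseToMean V x i - a i‖ ^ 2 = ∑ i ∈ V, ‖finsetMean V x - a i‖ ^ 2 :=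
    sum_congr rfl fun i hi => by rw [collapseToMean_of_mem hi]
  have hout : ∑ i ∈ Vᶜ, ‖collapseToMean V x i - a i‖ ^ 2 = ∑ i ∈ Vᶜ, ‖x i - a i‖ ^ 2 :=
    sum_congr rfl fun i hi => by rw [collapseToMean_of_notMem (mem_compl.mp hi)]
  have hfidelity := sum_norm_finsetMean_sub_sq_add_le ha x
  have hpenalty := mul_le_mul_of_nonneg_left (sum_sum_norm_collapseToMean_sub_add_le V x) hlam
  rw [mul_add] at hpenalty
  rw [sonObjective_eq_sum_sum, sonObjective_eq_sum_sum, ← sum_add_sum_compl V,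
    ← sum_add_sum_compl V (fun i => ‖x i - a i‖ ^ 2), hin, hout]
  linarith

theorem eq_of_forall_sonObjective_le (ha : ∀ i ∈ V, ∀ j ∈ V, ‖a i - a j‖ ≤ lam * #V)
    {x : Fin n → EuclideanSpace ℝ (Fin d)} (hx : ∀ y, sonObjective a lam x ≤ sonObjective a lam y)
    {i j : Fin n} (hi : i ∈ V) (hj : j ∈ V) : x i = x j := by
  have hcard : (0 : ℝ) < #V := mod_cast card_pos.mpr ⟨i, hi⟩
  have hlam : 0 ≤ lam := nonneg_of_mul_nonneg_left ((norm_nonneg _).trans (ha i hi i hi)) hcard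
  have hvariance : ∑ k ∈ V, ‖x k - finsetMean V x‖ ^ 2 ≤ 0 := by
    linarith [sonObjective_collapseToMean_add_le hlam ha x, hx (collapseToMean V x)]
  have hmean (k : Fin n) (hk : k ∈ V) : x k = finsetMean V x := by
    have hk₀ : ‖x k - finsetMean V x‖ ^ 2 ≤ 0 :=
      (single_le_sum (fun l _ => sq_nonneg ‖x l - finsetMean V x‖) hk).trans hvariance
    simpa [sub_eq_zero] using hk₀.antisymm (sq_nonneg _)
  rw [hmean i hi, hmean j hj]

end Clustering

section Concentration

lemma hasSubgaussianMGF_measureReal_sub_indicator {Ω : Type*} [MeasurableSpace Ω] (μ : Measure Ω)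
    [IsProbabilityMeasure μ] {s : Set Ω} (hs : MeasurableSet s) :
    HasSubgaussianMGF (fun ω => μ.real s - s.indicator 1 ω) (1 / 4) μ := by
  have hIcc (ω : Ω) : s.indicator (1 : Ω → ℝ) ω ∈ Set.Icc 0 1 := by
    by_cases hω : ω ∈ s <;> simp [hω]
  have hsub := (hasSubgaussianMGF_of_mem_Icc (μ := μ)
    (measurable_one.indicator hs).aemeasurable (.of_forall hIcc)).neg
  rw [integral_indicator_one hs] at hsub
  convert hsub using 1
  · ext ω
    simp
  · ext
    norm_num

theorem measureReal_card_mem_add_le_sum_le {Ω ι : Type*} [MeasurableSpace Ω] [Fintype ι]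
    {μ : Measure Ω} {s : ι → Set Ω} [∀ ω, DecidablePred (ω ∈ s ·)]
    (hs : ∀ i, MeasurableSet (s i)) (hind : iIndepSet s μ) {t : ℝ} (ht : 0 ≤ t) :
    μ.real {ω | #{i | ω ∈ s i} + t ≤ ∑ i, μ.real (s i)} ≤
      Real.exp (-(2 * t ^ 2 / Fintype.card ι)) := by
  have := hind.isProbabilityMeasure
  have hX : iIndepFun (fun i ω => μ.real (s i) - (s i).indicator 1 ω) μ :=
    hind.iIndepFun_indicator.comp (fun i u => μ.real (s i) - u) fun i => by fun_prop
  convert HasSubgaussianMGF.measure_sum_ge_le_of_iIndepFun hX (s := univ)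
    (fun i _ => hasSubgaussianMGF_measureReal_sub_indicator μ (hs i)) ht using 2
  · simp [Set.indicator_apply, add_comm, le_sub_iff_add_le]
  · simp only [one_div, sum_const, card_univ, nsmul_eq_mul, NNReal.coe_mul, NNReal.coe_natCast,
      NNReal.coe_inv, NNReal.coe_ofNat]
    ring

lemma iIndepSet_pi_preimage {ι : Type*} [Fintype ι] {Ω : ι → Type*}
    [∀ i, MeasurableSpace (Ω i)] (μ : ∀ i, Measure (Ω i)) [∀ i, IsProbabilityMeasure (μ i)]
    {B : ∀ i, Set (Ω i)} (hB : ∀ i, MeasurableSet (B i)) :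
    iIndepSet (fun i => Function.eval i ⁻¹' B i) (Measure.pi μ) := by
  refine (iIndepSet_iff_meas_biInter fun i => measurable_pi_apply i (hB i)).mpr fun S => ?_
  exact (iIndepFun_pi (X := fun _ => id) fun _ => aemeasurable_id).meas_biInter
    fun i _ => ⟨B i, hB i, rfl⟩

theorem measureReal_pi_card_mem_add_le {Ω ι : Type*} [MeasurableSpace Ω] [Fintype ι]
    (P : Measure Ω) [IsProbabilityMeasure P] {B : Set Ω} [DecidablePred (· ∈ B)]
    (hB : MeasurableSet B) {ε : ℝ} (hε : 0 ≤ ε) :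
    (Measure.pi fun _ : ι => P).real
        {a | #{i | a i ∈ B} + Fintype.card ι * ε ≤ Fintype.card ι * P.real B} ≤
      Real.exp (-(2 * ε ^ 2) * Fintype.card ι) := by
  let (a : ι → Ω) : DecidablePred fun i => a ∈ Function.eval i ⁻¹' B :=
    fun i => inferInstanceAs (Decidable (a i ∈ B))
  have hoeffding := measureReal_card_mem_add_le_sum_le (fun i => measurable_pi_apply i hB)
    (iIndepSet_pi_preimage (fun _ : ι => P) fun _ => hB) (t := Fintype.card ι * ε) (by positivity)
  have heval (i : ι) : (Measure.pi fun _ : ι => P).real (Function.eval i ⁻¹' B) = P.real B :=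
    (measurePreserving_eval (fun _ : ι => P) i).measureReal_preimage hB.nullMeasurableSet
  have hexponent : 2 * (Fintype.card ι * ε) ^ 2 / Fintype.card ι =
      2 * ε ^ 2 * Fintype.card ι := by
    rcases eq_or_ne (Fintype.card ι) 0 with hι | hι
    · simp [hι]
    · field_simp
  simp only [heval, sum_const, card_univ, nsmul_eq_mul, hexponent] at hoeffding
  rw [neg_mul]
  exact hoeffding

lemma ofReal_one_sub_le_measure_compl {Ω : Type*} [MeasurableSpace Ω] {μ : Measure Ω}
    [IsProbabilityMeasure μ] {s : Set Ω} {δ : ℝ} (hs : μ.real s ≤ δ) :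
    ENNReal.ofReal (1 - δ) ≤ μ sᶜ := by
  have hunion : 1 ≤ μ.real s + μ.real sᶜ := by simpa using measureReal_union_le (μ := μ) s sᶜ
  rw [← ofReal_measureReal (μ := μ)]
  exact ENNReal.ofReal_le_ofReal (by linarith)

theorem ofReal_one_sub_exp_le_pi_lt_card_mem {Ω ι : Type*} [MeasurableSpace Ω] [Fintype ι]
    (P : Measure Ω) [IsProbabilityMeasure P] {B : Set Ω} [DecidablePred (· ∈ B)]
    (hB : MeasurableSet B) {q ε : ℝ} (hε : 0 ≤ ε) (hP : q + ε ≤ P.real B) :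
    ENNReal.ofReal (1 - Real.exp (-(2 * ε ^ 2) * Fintype.card ι)) ≤
      (Measure.pi fun _ : ι => P) {a | q * Fintype.card ι < #{i | a i ∈ B}} := by
  refine (ofReal_one_sub_le_measure_compl (measureReal_pi_card_mem_add_le P hB hε)).trans
    (measure_mono fun a ha => ?_)
  simp only [Set.mem_compl_iff, Set.mem_ofPred_eq, not_le] at ha ⊢
  linarith [mul_le_mul_of_nonneg_left hP (Fintype.card ι).cast_nonneg]

end Concentration

section Gaussian

variable {d K : ℕ}

instance isProbabilityMeasure_sphericalGaussian (μ : EuclideanSpace ℝ (Fin d)) (σ : ℝ) :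
    IsProbabilityMeasure (sphericalGaussian d μ σ) :=
  Measure.isProbabilityMeasure_map (MeasurableEquiv.measurable _).aemeasurable

lemma gaussianReal_sq_eq_map (m s : ℝ) :
    gaussianReal m (s ^ 2).toNNReal = (gaussianReal 0 1).map (fun t => s * t + m) := by
  have hcomp : (fun t => s * t + m) = (· + m) ∘ (s * ·) := rfl
  rw [hcomp, ← Measure.map_map (by fun_prop) (by fun_prop), gaussianReal_map_const_mul,
    gaussianReal_map_add_const, mul_zero, zero_add, mul_one, Real.toNNReal_of_nonneg (sq_nonneg s)]

lemma sphericalGaussian_eq_map (μ : EuclideanSpace ℝ (Fin d)) (σ : ℝ) :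
    sphericalGaussian d μ σ =
      (Measure.pi fun _ : Fin d => gaussianReal 0 1).map fun y => σ • WithLp.toLp 2 y + μ := by
  have (i : Fin d) :
      IsProbabilityMeasure ((gaussianReal 0 1).map fun t => σ * t + μ i) :=
    Measure.isProbabilityMeasure_map (by fun_prop)
  simp only [sphericalGaussian, gaussianReal_sq_eq_map]
  rw [← Measure.pi_map_pi fun i => by fun_prop,
    Measure.map_map (MeasurableEquiv.measurable _) (by fun_prop)]
  rfl

lemma sphericalGaussian_setOf_norm_sub_le (μ : EuclideanSpace ℝ (Fin d)) {σ θ : ℝ} (hσ : 0 < σ)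
    (hθ : 0 ≤ θ) :
    sphericalGaussian d μ σ {z | ‖z - μ‖ ≤ θ * σ} = chiSquaredMeasure d (Set.Iic (θ ^ 2)) := by
  rw [sphericalGaussian_eq_map, chiSquaredMeasure,
    Measure.map_apply (by fun_prop) (measurableSet_le (by fun_prop) (by fun_prop)),
    Measure.map_apply (by fun_prop) measurableSet_Iic]
  congr 1
  ext y
  have hnorm : ‖WithLp.toLp 2 y‖ ^ 2 = ∑ i, y i ^ 2 := by simp [EuclideanSpace.norm_sq_eq]
  simp only [Set.mem_preimage, Set.mem_ofPred_eq, Set.mem_Iic, add_sub_cancel_right, norm_smul,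
    Real.norm_of_nonneg hσ.le, mul_comm θ σ, mul_le_mul_iff_right₀ hσ]
  rw [← hnorm, sq_le_sq₀ (norm_nonneg _) hθ]

lemma isProbabilityMeasure_gaussianMixture (μ : Fin K → EuclideanSpace ℝ (Fin d)) (σ : Fin K → ℝ)
    {w : Fin K → ℝ} (hw : ∀ k, 0 ≤ w k) (hwsum : ∑ k, w k = 1) :
    IsProbabilityMeasure (gaussianMixture d K μ σ w) where
  measure_univ := by
    simp only [gaussianMixture, Measure.coe_finsetSum, Finset.sum_apply, Measure.smul_apply,
      measure_univ, smul_eq_mul, mul_one]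
    rw [← ENNReal.ofReal_sum_of_nonneg fun k _ => hw k, hwsum, ENNReal.ofReal_one]

lemma smul_sphericalGaussian_le_gaussianMixture (μ : Fin K → EuclideanSpace ℝ (Fin d))
    (σ w : Fin K → ℝ) (m : Fin K) :
    ENNReal.ofReal (w m) • sphericalGaussian d (μ m) (σ m) ≤ gaussianMixture d K μ σ w := by
  rw [gaussianMixture, ← add_sum_erase _ _ (mem_univ m)]
  exact Measure.le_add_right le_rfl

lemma chiSquaredCDF_mul_le_gaussianMixture_real (μ : Fin K → EuclideanSpace ℝ (Fin d))
    {σ w : Fin K → ℝ} [IsFiniteMeasure (gaussianMixture d K μ σ w)] {m : Fin K} (hσ : 0 < σ m)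
    (hw : 0 ≤ w m) {θ : ℝ} (hθ : 0 ≤ θ) :
    chiSquaredCDF θ d * w m ≤
      (gaussianMixture d K μ σ w).real {z | ‖z - μ m‖ ≤ θ * σ m} := by
  have hle := ENNReal.toReal_mono (measure_ne_top _ _)
    (smul_sphericalGaussian_le_gaussianMixture μ σ w m {z | ‖z - μ m‖ ≤ θ * σ m})
  rwa [Measure.smul_apply, sphericalGaussian_setOf_norm_sub_le (μ m) hσ hθ, smul_eq_mul,
    ENNReal.toReal_mul, ENNReal.toReal_ofReal hw, mul_comm] at hle

end Gaussian

theorem recovery_of_one_component_general {d : ℕ} (P : Measure (EuclideanSpace ℝ (Fin d)))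
    [IsProbabilityMeasure P] {B : Set (EuclideanSpace ℝ (Fin d))} (hB : MeasurableSet B)
    {D : ℝ} (hD : ∀ z ∈ B, ∀ z' ∈ B, ‖z - z'‖ ≤ D) {q ε : ℝ} (hq : 0 < q) (hε : 0 ≤ ε)
    (hP : q + ε ≤ P.real B) {n : ℕ} {lam : ℝ} (hlam : D / (q * n) ≤ lam) :
    ENNReal.ofReal (1 - Real.exp (-(2 * ε ^ 2) * n)) ≤
      (Measure.pi fun _ : Fin n => P)
        {a | ∀ x : Fin n → EuclideanSpace ℝ (Fin d),
          (∀ y, sonObjective a lam x ≤ sonObjective a lam y) →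
          ∀ i i' : Fin n, a i ∈ B → a i' ∈ B → x i = x i'} := by
  classical
  have hprob := ofReal_one_sub_exp_le_pi_lt_card_mem (ι := Fin n) P hB hε hP
  rw [Fintype.card_fin] at hprob
  refine hprob.trans (measure_mono ?_)
  intro a ha x hx i i' hi hi'
  have hqn : 0 < q * n := mul_pos hq (mod_cast i.pos)
  have hD₀ : 0 ≤ D := (norm_nonneg _).trans (hD _ hi _ hi)
  have hcard : D ≤ lam * #{j | a j ∈ B} :=
    calc D ≤ lam * (q * n) := (div_le_iff₀ hqn).mp hlam
      _ ≤ lam * #{j | a j ∈ B} :=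
        mul_le_mul_of_nonneg_left (le_of_lt ha) ((div_nonneg hD₀ hqn.le).trans hlam)
  refine eq_of_forall_sonObjective_le (V := {j | a j ∈ B}) (fun j hj k hk => ?_) hx
    (by simpa using hi) (by simpa using hi')
  simp only [mem_filter_univ] at hj hk
  exact (hD _ hj _ hk).trans hcard

/-- Recovery of one Gaussian component: for `n` i.i.d. samples from the mixture and
`λ ≥ 2θσ_m/((F(θ,d)w_m − ε)n)`, with probability at least `1 − C·e^{−c·n}` all sample
points within `θσ_m` of `μ_m` are assigned to the same cluster by sum-of-norms
clustering. -/
theorem recovery_of_one_component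
    (d K : ℕ) (μ : Fin K → EuclideanSpace ℝ (Fin d)) (σ : Fin K → ℝ) (hσ : ∀ k, 0 < σ k)
    (w : Fin K → ℝ) (hw : ∀ k, 0 < w k) (hwsum : ∑ k, w k = 1)
    (θ : ℝ) (hθ : 0 < θ) (m : Fin K) (ε : ℝ) (hε : 0 < ε)
    (hεlt : ε < chiSquaredCDF θ d * w m)
    (lam : ℕ → ℝ)
    (hlam : ∀ n : ℕ, 2 * θ * σ m / ((chiSquaredCDF θ d * w m - ε) * n) ≤ lam n) :
    ∃ c : ℝ, 0 < c ∧ ∃ C : ℝ, ∀ n : ℕ,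
      ENNReal.ofReal (1 - C * Real.exp (-c * n)) ≤
        (Measure.pi fun _ : Fin n => gaussianMixture d K μ σ w)
          {a | ∀ x : Fin n → EuclideanSpace ℝ (Fin d),
            (∀ y : Fin n → EuclideanSpace ℝ (Fin d),
              sonObjective a (lam n) x ≤ sonObjective a (lam n) y) →
            ∀ i i' : Fin n,
              ‖a i - μ m‖ ≤ θ * σ m → ‖a i' - μ m‖ ≤ θ * σ m → x i = x i'} := by
  have := isProbabilityMeasure_gaussianMixture μ σ (fun k => (hw k).le) hwsum
  have hmass := chiSquaredCDF_mul_le_gaussianMixture_real μ (w := w) (hσ m) (hw m).le hθ.le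
  refine ⟨2 * ε ^ 2, by positivity, 1, fun n => ?_⟩
  rw [one_mul]
  exact recovery_of_one_component_general _ (B := {z | ‖z - μ m‖ ≤ θ * σ m})
    (measurableSet_le (by fun_prop) (by fun_prop))
    (fun z hz z' hz' => by simpa [two_mul, add_mul] using norm_sub_le_of_le hz hz')
    (sub_pos.mpr hεlt) hε.le (by rwa [sub_add_cancel]) (hlam n)
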